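/- For positive integers p(1), ..., p(r), the number of irreducible components of the normalization of Spec(ℂ[[ξ, ξ̃₁, ..., ξ̃_r]]/(ξ = ξ̃₁^{p(1)} = ··· = ξ̃_r^{p(r)})) equals (∏_{j=1}^r p(j)) / lcm(p(1), ..., p(r)). -/

import Mathlib

open MvPowerSeries

/-- The deformation ring ℂ[[ξ, ξ̃₁, …, ξ̃_r]]/(ξ − ξ̃₁^{p 1}, …, ξ − ξ̃_r^{p r}). -/
noncomputable abbrev defRing' (r : ℕ) (p : Fin r → ℕ) : Type :=
  MvPowerSeries (Fin (r + 1)) ℂ ⧸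
    Ideal.span (Set.range fun j : Fin r =>
      (X (0 : Fin (r + 1)) : MvPowerSeries (Fin (r + 1)) ℂ) - X j.succ ^ p j)

lemma card_minPrimes_loc {A Q : Type*} [CommRing A] [CommRing Q] [Algebra A Q] (M : Submonoid A)
    [IsLocalization M Q] (hM : M ≤ nonZeroDivisors A) :
    Nat.card (minimalPrimes A) = Nat.card (minimalPrimes Q) := by
  have h := IsLocalization.minimalPrimes_comap M Q (⊥ : Ideal Q)
  have hb : (⊥ : Ideal Q).comap (algebraMap A Q) = ⊥ := by
    rw [← RingHom.ker_eq_comap_bot]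
    exact (RingHom.injective_iff_ker_eq_bot _).1 (IsLocalization.injective Q hM)
  rw [hb] at h
  change Nat.card (Ideal.minimalPrimes (⊥ : Ideal A)) = Nat.card (Ideal.minimalPrimes (⊥ : Ideal Q))
  rw [h]
  exact Nat.card_image_of_injective
    (IsLocalization.orderEmbedding M Q).injective _

lemma card_irred_normalization (R : Type*) [CommRing R] :
    Nat.card (irreducibleComponents (PrimeSpectrum
        (integralClosure R (Localization (nonZeroDivisors R))))) = Nat.card (minimalPrimes R) := by
  have e := (minimalPrimes.equivIrreducibleComponents
    (integralClosure R (Localization (nonZeroDivisors R))))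
  refine (Nat.card_congr (e.toEquiv.trans OrderDual.ofDual)).symm.trans ?_
  rw [card_minPrimes_loc (Q := Localization (nonZeroDivisors R)) (nonZeroDivisors R) le_rfl]
  set Q := Localization (nonZeroDivisors R)
  set A := integralClosure R Q
  have hinj : Function.Injective (algebraMap A Q) := Subtype.val_injective
  have hloc : IsLocalization (Algebra.algebraMapSubmonoid A (nonZeroDivisors R)) Q := by
    constructor
    constructor
    · rintro ⟨_, m, hm, rfl⟩
      have := IsLocalization.map_units Q (⟨m, hm⟩ : nonZeroDivisors R)
      simpa [← IsScalarTower.algebraMap_apply] using this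
    · intro z
      obtain ⟨⟨a, m⟩, h⟩ := IsLocalization.surj (nonZeroDivisors R) z
      refine ⟨⟨algebraMap R A a, ⟨algebraMap R A m, m, m.2, rfl⟩⟩, ?_⟩
      simpa [← IsScalarTower.algebraMap_apply] using h
    · intro x y h
      exact ⟨1, by rw [hinj h]⟩
  refine card_minPrimes_loc (Algebra.algebraMapSubmonoid A (nonZeroDivisors R)) ?_
  rintro _ ⟨m, hm, rfl⟩
  have := IsLocalization.map_units Q (⟨m, hm⟩ : nonZeroDivisors R)
  rw [mem_nonZeroDivisors_iff_right]
  intro x hx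
  apply hinj
  have h2 := congrArg (algebraMap A Q) hx
  rw [map_mul, ← IsScalarTower.algebraMap_apply, map_zero] at h2
  rw [map_zero]
  exact (this.mul_left_eq_zero).1 h2

section

variable {r : ℕ} (p : Fin r → ℕ)

lemma div_step (i : Fin (r + 1)) (hi : i ≠ 0) (P : ℕ) (f : MvPowerSeries (Fin (r + 1)) ℂ) :
    ∃ q : MvPowerSeries (Fin (r + 1)) ℂ, ∀ n, coeff n (f - (X 0 - X i ^ P) * q) =
      if P ≤ n i then 0 else
        ∑ k ∈ Finset.range (n 0 + 1),
          coeff (n - Finsupp.single 0 k + Finsupp.single i (k * P)) f := by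
  classical
  let q : MvPowerSeries (Fin (r + 1)) ℂ := fun n =>
    -∑ k ∈ Finset.range (n 0 + 1),
          coeff (n - Finsupp.single 0 k + Finsupp.single i ((k + 1) * P)) f
  have hq : ∀ n, coeff n q = -∑ k ∈ Finset.range (n 0 + 1),
          coeff (n - Finsupp.single 0 k + Finsupp.single i ((k + 1) * P)) f := fun n => rfl
  refine ⟨q, fun n => ?_⟩
  have h1 : coeff n (X 0 * q) = -∑ k ∈ Finset.range (n 0),
      coeff (n - Finsupp.single 0 (k + 1) + Finsupp.single i ((k + 1) * P)) f := by
    rw [X_def, coeff_monomial_mul]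
    rcases Nat.eq_zero_or_pos (n 0) with h0 | h0
    · rw [if_neg, h0]
      · simp
      · simp [h0]
    · rw [if_pos (by simpa [Nat.one_le_iff_ne_zero] using h0.ne'), one_mul, hq]
      have : (n - Finsupp.single 0 1 : Fin (r + 1) →₀ ℕ) 0 + 1 = n 0 := by
        simp; omega
      rw [this]
      congr 1
      refine Finset.sum_congr rfl fun k _ => ?_
      congr 2
      rw [tsub_tsub, ← Finsupp.single_add, add_comm 1 k]
  have h2 : coeff n (X i ^ P * q) = if P ≤ n i then -∑ k ∈ Finset.range (n 0 + 1),
      coeff (n - Finsupp.single 0 k + Finsupp.single i (k * P)) f else 0 := by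
    rw [X_pow_eq, coeff_monomial_mul]
    simp only [Finsupp.single_le_iff]
    split_ifs with h
    · rw [one_mul, hq]
      have : (n - Finsupp.single i P : Fin (r + 1) →₀ ℕ) 0 = n 0 := by
        simp [Finsupp.single_apply, hi]
      rw [this]
      congr 1
      refine Finset.sum_congr rfl fun k _ => ?_
      congr 2
      ext j
      simp only [Finsupp.add_apply, Finsupp.tsub_apply, Finsupp.single_apply, add_mul, one_mul]
      by_cases hj : i = j
      · subst hj
        simp [hi.symm]
        omega
      · simp [hj]
    · rfl
  rw [sub_mul, map_sub, map_sub, h1, h2]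
  split_ifs with h
  · rw [Finset.sum_range_succ']
    simp
  · rw [Finset.sum_range_succ']
    simp [add_comm]

lemma reduce (S : Finset (Fin r)) (f : MvPowerSeries (Fin (r + 1)) ℂ) :
    ∃ g, f - g ∈ Ideal.span (Set.range fun j : Fin r =>
      (X (0 : Fin (r + 1)) : MvPowerSeries (Fin (r + 1)) ℂ) - X j.succ ^ p j) ∧
      ∀ n, (∃ j ∈ S, p j ≤ n j.succ) → coeff n g = 0 := by
  classical
  induction S using Finset.induction_on with
  | empty => exact ⟨f, by simp, by simp⟩
  | insert j S hj ih =>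
    obtain ⟨g, hg, hg0⟩ := ih
    obtain ⟨q, hq⟩ := div_step j.succ (Fin.succ_ne_zero j) (p j) g
    refine ⟨g - (X 0 - X j.succ ^ p j) * q, ?_, ?_⟩
    · rw [← sub_add]
      exact add_mem hg (Ideal.mul_mem_right _ _ (Ideal.subset_span ⟨j, rfl⟩))
    · rintro n ⟨i, hi, hn⟩
      rw [hq]
      split_ifs with h
      · rfl
      · refine Finset.sum_eq_zero fun k _ => hg0 _ ?_
        have hij : i ≠ j := by rintro rfl; exact h hn
        refine ⟨i, (Finset.mem_insert.1 hi).resolve_left hij, ?_⟩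
        have : j.succ ≠ i.succ := fun h => hij (Fin.succ_injective _ h).symm
        have h0 : (0 : Fin (r+1)) ≠ i.succ := (Fin.succ_ne_zero i).symm
        simpa [Finsupp.single_apply, this, h0] using hn

noncomputable def iota (r : ℕ) : PowerSeries ℂ →ₐ[ℂ] MvPowerSeries (Fin (r + 1)) ℂ :=
  PowerSeries.substAlgHom (PowerSeries.HasSubst.X (0 : Fin (r + 1)))

noncomputable def piHom : MvPolynomial (Fin r) (PowerSeries ℂ) →+* defRing' r p :=
  MvPolynomial.eval₂Hom ((Ideal.Quotient.mk _).comp (iota r).toRingHom)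
    (fun j => Ideal.Quotient.mk _ (X j.succ))

lemma coeff_iota (f : PowerSeries ℂ) (e : Fin (r + 1) →₀ ℕ) :
    coeff e (iota r f) = if e = Finsupp.single 0 (e 0) then PowerSeries.coeff (e 0) f else 0 := by
  rw [iota, PowerSeries.coe_substAlgHom]
  exact PowerSeries.coeff_subst_single 0 f e

lemma reduced_eq (g : MvPowerSeries (Fin (r + 1)) ℂ)
    (hg : ∀ n, (∃ j, p j ≤ n j.succ) → coeff n g = 0) :
    g = ∑ a ∈ Fintype.piFinset (fun j => Finset.range (p j)),
      (∏ j : Fin r, X j.succ ^ a j) * iota r (PowerSeries.mk fun k =>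
        coeff (Finsupp.cons k (Finsupp.equivFunOnFinite.symm a)) g) := by
  classical
  have hm : ∀ a : Fin r → ℕ, (∏ j : Fin r, (X j.succ : MvPowerSeries (Fin (r + 1)) ℂ) ^ a j) =
      monomial (Finsupp.cons 0 (Finsupp.equivFunOnFinite.symm a)) 1 := by
    intro a
    simp only [X_pow_eq, prod_monomial, Finset.prod_const_one]
    refine congrArg (fun m => monomial m (1 : ℂ)) ?_
    ext i
    refine Fin.cases ?_ (fun j => ?_) i
    · simp
    · simp [Finsupp.single_apply]
  ext n
  simp only [map_sum, hm, coeff_monomial_mul, coeff_iota, one_mul]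
  have ht : ∀ a : Fin r → ℕ, (Finsupp.cons 0 (Finsupp.equivFunOnFinite.symm a) ≤ n ∧
      (n - Finsupp.cons 0 (Finsupp.equivFunOnFinite.symm a) : Fin (r + 1) →₀ ℕ) =
        Finsupp.single 0 ((n - Finsupp.cons 0 (Finsupp.equivFunOnFinite.symm a) : Fin (r + 1) →₀ ℕ) 0))
      ↔ a = fun j => n j.succ := by
    intro a
    constructor
    · rintro ⟨h1, h2⟩
      funext j
      have := DFunLike.congr_fun h2 j.succ
      have h3 := h1 j.succ
      simp [Finsupp.single_apply, (Fin.succ_ne_zero j).symm] at this h3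
      omega
    · rintro rfl
      constructor
      · intro i
        refine Fin.cases ?_ (fun j => ?_) i <;> simp
      · ext i
        refine Fin.cases ?_ (fun j => ?_) i
        · simp
        · simp [Finsupp.single_apply, (Fin.succ_ne_zero j).symm]
  by_cases hn : ∃ j, p j ≤ n j.succ
  · rw [hg n hn]
    symm
    refine Finset.sum_eq_zero fun a ha => ?_
    by_cases h : a = fun j => n j.succ
    · exfalso
      obtain ⟨j, hj⟩ := hn
      have := Fintype.mem_piFinset.1 ha j
      rw [h, Finset.mem_range] at this
      exact absurd hj (not_le.2 this)
    · rw [← ite_and, if_neg (fun h' => h ((ht a).1 h'))]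
  · push Not at hn
    rw [Finset.sum_eq_single (fun j => n j.succ)]
    · rw [← ite_and, if_pos ((ht _).2 rfl), PowerSeries.coeff_mk]
      congr 2
      ext i
      refine Fin.cases ?_ (fun j => ?_) i <;> simp
    · intro a _ h
      rw [← ite_and, if_neg (fun h' => h ((ht a).1 h'))]
    · intro h
      exact absurd (Fintype.mem_piFinset.2 fun j => Finset.mem_range.2 (hn j)) h

lemma piHom_surj : Function.Surjective (piHom p) := by
  intro x
  obtain ⟨f, rfl⟩ := Ideal.Quotient.mk_surjective x
  obtain ⟨g, hfg, hg⟩ := reduce p Finset.univ f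
  rw [(Ideal.Quotient.eq).2 hfg, reduced_eq p g (fun n ⟨j, hj⟩ => hg n ⟨j, Finset.mem_univ _, hj⟩)]
  refine ⟨∑ a ∈ Fintype.piFinset (fun j => Finset.range (p j)),
      (∏ j : Fin r, MvPolynomial.X j ^ a j) * MvPolynomial.C (PowerSeries.mk fun k =>
        coeff (Finsupp.cons k (Finsupp.equivFunOnFinite.symm a)) g), ?_⟩
  simp [piHom]


lemma bez (hp : ∀ j, 0 < p j) : ∃ u : Fin r → ℕ,
    ∑ j, u j * (Finset.univ.lcm p / p j) ≡ 1 [MOD Finset.univ.lcm p] := by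
  set L := Finset.univ.lcm p with hL
  have hd : ∀ j, p j ∣ L := fun j => Finset.dvd_lcm (Finset.mem_univ j)
  have hL0 : L ≠ 0 := by
    rw [hL, Ne, Finset.lcm_eq_zero_iff]
    rintro ⟨j, _, h⟩
    exact (hp j).ne' h
  have h1 : (1 : ℤ) ∈ Ideal.span (insert (L : ℤ) (Set.range fun j => ((L / p j : ℕ) : ℤ))) := by
    set I := Ideal.span (insert (L : ℤ) (Set.range fun j => ((L / p j : ℕ) : ℤ)))
    obtain ⟨d, hdI⟩ := (IsPrincipalIdealRing.principal I).principal
    have hmem : ∀ x ∈ I, d ∣ x := fun x hx => by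
      rw [hdI] at hx
      exact Ideal.mem_span_singleton.1 hx
    have a1 : d.natAbs ∣ L := by
      have := hmem (L : ℤ) (Ideal.subset_span (Set.mem_insert _ _))
      exact Int.natAbs_dvd_natAbs.2 this
    have a2 : ∀ j, d.natAbs ∣ L / p j := fun j => by
      have := hmem ((L / p j : ℕ) : ℤ) (Ideal.subset_span (Set.mem_insert_of_mem _ ⟨j, rfl⟩))
      exact Int.natAbs_dvd_natAbs.2 this
    have a3 : L ∣ L / d.natAbs := by
      apply Finset.lcm_dvd
      intro j _
      obtain ⟨k, hk⟩ := a2 j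
      have : L = d.natAbs * (k * p j) := by
        rw [← mul_assoc, ← hk, Nat.div_mul_cancel (hd j)]
      have hd0 : 0 < d.natAbs := Nat.pos_of_ne_zero fun h => hL0 (by rw [this, h, zero_mul])
      rw [Nat.div_eq_of_eq_mul_right hd0 this]
      exact dvd_mul_left _ _
    have a4 : d.natAbs = 1 := by
      obtain ⟨k, hk⟩ := a1
      have hd0 : 0 < d.natAbs := Nat.pos_of_ne_zero fun h => hL0 (by rw [hk, h, zero_mul])
      rw [Nat.div_eq_of_eq_mul_right hd0 hk] at a3
      have hk0 : 0 < k := Nat.pos_of_ne_zero fun h => hL0 (by rw [hk, h, mul_zero])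
      have := Nat.le_of_dvd hk0 a3
      rw [hk] at this
      nlinarith
    have : IsUnit d := Int.isUnit_iff_natAbs_eq.2 a4
    rw [hdI]
    exact Ideal.mem_span_singleton.2 this.dvd
  rw [Ideal.mem_span_insert] at h1
  obtain ⟨a, z, hz, h1⟩ := h1
  rw [Ideal.mem_span_range_iff_exists_fun] at hz
  obtain ⟨c, hc⟩ := hz
  refine ⟨fun j => (c j % L).toNat, ?_⟩
  rw [← Int.natCast_modEq_iff]
  push_cast
  have : ∀ j, (((c j % L).toNat : ℕ) : ℤ) = c j % L := fun j =>
    Int.toNat_of_nonneg (Int.emod_nonneg _ (by exact_mod_cast hL0))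
  simp only [this]
  calc ∑ j, c j % (L:ℤ) * ((L:ℤ) / p j) ≡ ∑ j, c j * ((L:ℤ) / p j) [ZMOD L] := by
        apply Int.ModEq.sum
        intro j _
        exact (Int.mod_modEq _ _).mul_right _
    _ ≡ 1 [ZMOD L] := by
        rw [h1, ← hc]
        push_cast
        exact (Int.modEq_iff_dvd.2 (by simp))

abbrev GG : Type := ∀ j, rootsOfUnity (p j) ℂ

noncomputable def actHom (hd : ∀ j, p j ∣ Finset.univ.lcm p) :
    rootsOfUnity (Finset.univ.lcm p) ℂ →* GG p where
  toFun w j := ⟨(w : ℂˣ) ^ (Finset.univ.lcm p / p j), by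
    rw [mem_rootsOfUnity, ← pow_mul, Nat.div_mul_cancel (hd j)]
    exact w.2⟩
  map_one' := by ext; simp
  map_mul' a b := by ext; simp [mul_pow]

lemma lcm_ne (hp : ∀ j, 0 < p j) : Finset.univ.lcm p ≠ 0 := by
  rw [Ne, Finset.lcm_eq_zero_iff]
  rintro ⟨j, _, h⟩
  exact (hp j).ne' h

lemma actHom_inj (hp : ∀ j, 0 < p j) (hd : ∀ j, p j ∣ Finset.univ.lcm p) :
    Function.Injective (actHom p hd) := by
  rw [injective_iff_map_eq_one]
  intro w hw
  obtain ⟨u, hu⟩ := bez p hp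
  have hj : ∀ j, (w : ℂˣ) ^ (Finset.univ.lcm p / p j) = 1 := fun j => by
    have := congrArg (fun g : GG p => ((g j : rootsOfUnity (p j) ℂ) : ℂˣ)) hw
    exact this
  have hwL : (w : ℂˣ) ^ (Finset.univ.lcm p) = 1 := w.2
  ext1
  have h1 : (w : ℂˣ) ^ (∑ j, u j * (Finset.univ.lcm p / p j)) = (w : ℂˣ) ^ 1 := by
    rw [pow_eq_pow_iff_modEq]
    exact hu.of_dvd (orderOf_dvd_of_pow_eq_one hwL)
  rw [pow_one] at h1
  rw [← h1, ← Finset.prod_pow_eq_pow_sum]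
  exact Finset.prod_eq_one fun j _ => by rw [mul_comm, pow_mul, hj, one_pow]

lemma card_quot (hp : ∀ j, 0 < p j) (hd : ∀ j, p j ∣ Finset.univ.lcm p) :
    Nat.card (GG p ⧸ (actHom p hd).range) = (∏ j, p j) / Finset.univ.lcm p := by
  have hL := lcm_ne p hp
  have h := Subgroup.card_eq_card_quotient_mul_card_subgroup (actHom p hd).range
  have h2 : Nat.card (actHom p hd).range = Finset.univ.lcm p := by
    rw [← Nat.card_congr (MonoidHom.ofInjective (actHom_inj p hp hd)).toEquiv]
    have : NeZero (Finset.univ.lcm p) := ⟨hL⟩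
    exact HasEnoughRootsOfUnity.natCard_rootsOfUnity ℂ _
  have h3 : Nat.card (GG p) = ∏ j, p j := by
    rw [Nat.card_pi]
    refine Finset.prod_congr rfl fun j _ => ?_
    have : NeZero (p j) := ⟨(hp j).ne'⟩
    exact HasEnoughRootsOfUnity.natCard_rootsOfUnity ℂ _
  rw [h2, h3] at h
  rw [h, Nat.mul_div_cancel _ (Nat.pos_of_ne_zero hL)]

/-- Two tuples giving the same values on the invariant monomials lie in the same coset. -/
lemma same_coset (hp : ∀ j, 0 < p j) (hd : ∀ j, p j ∣ Finset.univ.lcm p) (z z' : GG p)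
    (h : ∀ a : Fin r → ℕ, Finset.univ.lcm p ∣ ∑ j, a j * (Finset.univ.lcm p / p j) →
      ∏ j, (z j : ℂˣ) ^ a j = ∏ j, (z' j : ℂˣ) ^ a j) : z⁻¹ * z' ∈ (actHom p hd).range := by
  set L := Finset.univ.lcm p with hLd
  obtain ⟨u, hu⟩ := bez p hp
  set e : GG p := z⁻¹ * z' with he
  have h' : ∀ a : Fin r → ℕ, L ∣ ∑ j, a j * (L / p j) → ∏ j, (e j : ℂˣ) ^ a j = 1 := by
    intro a ha
    have := h a ha
    simp only [he, Pi.mul_apply, Pi.inv_apply, Subgroup.coe_mul, Subgroup.coe_inv, mul_pow,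
      Finset.prod_mul_distrib, inv_pow, Finset.prod_inv_distrib, this]
    simp
  have hep : ∀ j, (e j : ℂˣ) ^ p j = 1 := fun j => (e j).2
  let w : ℂˣ := ∏ i, (e i : ℂˣ) ^ u i
  have hw : w ^ L = 1 := by
    simp only [w, ← Finset.prod_pow]
    refine Finset.prod_eq_one fun i _ => ?_
    obtain ⟨k, hk⟩ := hd i
    rw [← pow_mul, mul_comm, hk, mul_assoc, pow_mul, hep, one_pow]
  refine ⟨⟨w, hw⟩, ?_⟩
  funext j
  ext1
  change w ^ (L / p j) = e j
  have key := h' (fun i => u i * (L / p j) + if i = j then p j - 1 else 0) ?_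
  · simp only [pow_add, Finset.prod_mul_distrib, pow_mul, Finset.prod_pow] at key
    have h5 : ∏ i, (e i : ℂˣ) ^ (if i = j then p j - 1 else 0) = (e j : ℂˣ) ^ (p j - 1) := by
      rw [Finset.prod_eq_single j]
      · simp
      · intro b _ hb; simp [hb]
      · simp
    rw [h5] at key
    have h6 : (e j : ℂˣ) ^ (p j - 1) * e j = 1 := by
      rw [← pow_succ, Nat.sub_add_cancel (hp j), hep]
    exact (eq_inv_of_mul_eq_one_left key).trans (eq_inv_of_mul_eq_one_right h6).symm
  · have : ∑ i, (u i * (L / p j) + if i = j then p j - 1 else 0) * (L / p i)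
        = (∑ i, u i * (L / p i)) * (L / p j) + (p j - 1) * (L / p j) := by
      simp only [add_mul, Finset.sum_add_distrib, Finset.sum_mul]
      congr 1
      · exact Finset.sum_congr rfl fun i _ => by ring
      · rw [Finset.sum_eq_single j]
        · simp
        · intro b _ hb; simp [hb]
        · simp
    rw [this]
    apply (Nat.modEq_zero_iff_dvd).1
    calc _ ≡ 1 * (L / p j) + (p j - 1) * (L / p j) [MOD L] := (hu.mul_right _).add_right _
      _ = L := by
        rw [← add_mul, Nat.add_sub_cancel' (hp j), Nat.mul_div_cancel' (hd j)]
      _ ≡ 0 [MOD L] := by simp [Nat.ModEq]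
/-! ### Branches -/

lemma dvd_of_eval_zero (L : ℕ) (hL : L ≠ 0) (g : Polynomial (PowerSeries ℂ))
    (hg : g.eval₂ (PowerSeries.expand L hL).toRingHom PowerSeries.X = 0) :
    (Polynomial.X ^ L - Polynomial.C PowerSeries.X) ∣ g := by
  set m : Polynomial (PowerSeries ℂ) := Polynomial.X ^ L - Polynomial.C PowerSeries.X with hm
  have hmon : m.Monic := Polynomial.monic_X_pow_sub_C _ hL
  rw [← Polynomial.modByMonic_eq_zero_iff_dvd hmon]
  set h := g %ₘ m with hh
  have hdeg : h.natDegree < L := by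
    have := Polynomial.natDegree_modByMonic_lt g hmon (by
      intro h1
      have := congrArg Polynomial.natDegree h1
      rw [hm, Polynomial.natDegree_X_pow_sub_C, Polynomial.natDegree_one] at this
      exact hL this)
    rwa [hm, Polynomial.natDegree_X_pow_sub_C] at this
  have he : h.eval₂ (PowerSeries.expand L hL).toRingHom PowerSeries.X = 0 := by
    have h1 := Polynomial.modByMonic_add_div g m
    have h2 := congrArg (Polynomial.eval₂ (PowerSeries.expand L hL).toRingHom PowerSeries.X) h1
    rw [hg, Polynomial.eval₂_add, Polynomial.eval₂_mul] at h2
    have h3 : m.eval₂ (PowerSeries.expand L hL).toRingHom PowerSeries.X = 0 := by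
      simp [hm]
    rw [h3, zero_mul, add_zero] at h2
    exact h2
  rw [Polynomial.eval₂_eq_sum_range' _ hdeg] at he
  ext b k
  rw [Polynomial.coeff_zero, map_zero]
  rcases lt_or_ge b L with hb | hb
  · have h4 := congrArg (PowerSeries.coeff (L * k + b)) he
    rw [map_sum, map_zero, Finset.sum_eq_single b] at h4
    · rw [PowerSeries.coeff_mul_X_pow] at h4
      exact (PowerSeries.coeff_expand_mul L hL _ k).symm.trans h4
    · intro c hc hcb
      rw [Finset.mem_range] at hc
      rw [PowerSeries.coeff_mul_X_pow']
      split_ifs with hle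
      · refine PowerSeries.coeff_expand_of_not_dvd L hL _ fun hdv => hcb ?_
        have e1 : (L * k + b) ≡ c [MOD L] := ((Nat.modEq_iff_dvd' hle).2 hdv).symm
        have e2 : b ≡ c [MOD L] := by
          have : L * k + b ≡ b [MOD L] := by simp [Nat.ModEq]
          exact this.symm.trans e1
        exact (Nat.ModEq.eq_of_lt_of_lt e2 hb hc).symm
      · rfl
    · intro h; exact absurd (Finset.mem_range.2 hb) h
  · rw [Polynomial.coeff_eq_zero_of_natDegree_lt (lt_of_lt_of_le hdeg hb), map_zero]

lemma quot_pos (hp : ∀ j, 0 < p j) (j : Fin r) : Finset.univ.lcm p / p j ≠ 0 := by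
  have := Finset.dvd_lcm (f := p) (Finset.mem_univ j)
  exact (Nat.div_pos (Nat.le_of_dvd (Nat.pos_of_ne_zero (lcm_ne p hp)) this) (hp j)).ne'

noncomputable def subVal (z : GG p) : Fin (r + 1) → PowerSeries ℂ :=
  Fin.cons (PowerSeries.X ^ Finset.univ.lcm p)
    (fun j => PowerSeries.C (((z j : rootsOfUnity (p j) ℂ) : ℂˣ) : ℂ) *
      PowerSeries.X ^ (Finset.univ.lcm p / p j))

lemma subVal_hasSubst (hp : ∀ j, 0 < p j) (z : GG p) :
    MvPowerSeries.HasSubst (τ := Unit) (subVal p z) := by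
  apply hasSubst_of_constantCoeff_zero
  intro i
  change PowerSeries.constantCoeff (subVal p z i) = 0
  refine Fin.cases ?_ (fun j => ?_) i
  · simp [subVal, lcm_ne p hp]
  · simp [subVal, quot_pos p hp]

noncomputable def phi0 (hp : ∀ j, 0 < p j) (z : GG p) :
    MvPowerSeries (Fin (r + 1)) ℂ →ₐ[ℂ] PowerSeries ℂ :=
  MvPowerSeries.substAlgHom (subVal_hasSubst p hp z)

lemma phi0_zero (hp : ∀ j, 0 < p j) (z : GG p) :
    phi0 p hp z (X 0) = PowerSeries.X ^ Finset.univ.lcm p := by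
  rw [phi0]
  exact (MvPowerSeries.substAlgHom_X (subVal_hasSubst p hp z) 0)

lemma phi0_succ (hp : ∀ j, 0 < p j) (z : GG p) (j : Fin r) :
    phi0 p hp z (X j.succ) = PowerSeries.C (((z j : rootsOfUnity (p j) ℂ) : ℂˣ) : ℂ) *
      PowerSeries.X ^ (Finset.univ.lcm p / p j) := by
  rw [phi0]
  exact (MvPowerSeries.substAlgHom_X (subVal_hasSubst p hp z) j.succ)

lemma root_pow (z : GG p) (j : Fin r) :
    (((z j : rootsOfUnity (p j) ℂ) : ℂˣ) : ℂ) ^ p j = 1 := by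
  have : ((z j : rootsOfUnity (p j) ℂ) : ℂˣ) ^ p j = 1 := (z j).2
  simpa only [Units.val_pow_eq_pow_val, Units.val_one] using congrArg Units.val this

noncomputable def phi (hp : ∀ j, 0 < p j) (z : GG p) : defRing' r p →+* PowerSeries ℂ :=
  Ideal.Quotient.lift _ (phi0 p hp z).toRingHom (by
    intro a ha
    have : Ideal.span (Set.range fun j : Fin r =>
      (X (0 : Fin (r + 1)) : MvPowerSeries (Fin (r + 1)) ℂ) - X j.succ ^ p j) ≤
        RingHom.ker (phi0 p hp z).toRingHom := by
      rw [Ideal.span_le]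
      rintro _ ⟨j, rfl⟩
      change phi0 p hp z _ = 0
      rw [map_sub, map_pow, phi0_zero, phi0_succ, mul_pow, ← pow_mul,
        Nat.div_mul_cancel (Finset.dvd_lcm (Finset.mem_univ j)), ← map_pow, root_pow]
      simp
    exact this ha)

lemma phi_mk (hp : ∀ j, 0 < p j) (z : GG p) (f) :
    phi p hp z (Ideal.Quotient.mk _ f) = phi0 p hp z f := rfl

lemma phi_iota (hp : ∀ j, 0 < p j) (z : GG p) (f : PowerSeries ℂ) :
    phi0 p hp z (iota r f) = PowerSeries.expand (Finset.univ.lcm p) (lcm_ne p hp) f := by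
  rw [PowerSeries.expand_apply, phi0, iota, PowerSeries.coe_substAlgHom,
    MvPowerSeries.coe_substAlgHom, PowerSeries.subst_def, PowerSeries.subst_def,
    MvPowerSeries.subst_comp_subst_apply (PowerSeries.HasSubst.X (0 : Fin (r + 1))).const
      (subVal_hasSubst p hp z)]
  congr 1
  funext _
  exact MvPowerSeries.subst_X (subVal_hasSubst p hp z) 0

lemma phi_piHom (hp : ∀ j, 0 < p j) (z : GG p) (b : MvPolynomial (Fin r) (PowerSeries ℂ)) :
    phi p hp z (piHom p b) =
      (MvPolynomial.eval₂Hom (Polynomial.C : PowerSeries ℂ →+* Polynomial (PowerSeries ℂ))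
        (fun j => Polynomial.C (PowerSeries.C (((z j : rootsOfUnity (p j) ℂ) : ℂˣ) : ℂ)) *
          Polynomial.X ^ (Finset.univ.lcm p / p j)) b).eval₂
        (PowerSeries.expand (Finset.univ.lcm p) (lcm_ne p hp)).toRingHom PowerSeries.X := by
  rw [← Polynomial.coe_eval₂RingHom, ← RingHom.comp_apply, ← RingHom.comp_apply]
  congr 1
  apply MvPolynomial.ringHom_ext
  · intro f
    simp [piHom, phi_mk, phi_iota]
  · intro j
    simp only [RingHom.comp_apply, piHom, MvPolynomial.eval₂Hom_X', phi_mk, phi0_succ,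
      Polynomial.coe_eval₂RingHom, Polynomial.eval₂_mul, Polynomial.eval₂_C,
      Polynomial.eval₂_X_pow]
    congr 1
    exact (PowerSeries.expand_C _ (lcm_ne p hp) _).symm

lemma iota_C (c : ℂ) : iota r (PowerSeries.C c) = C c := by
  rw [iota, PowerSeries.coe_substAlgHom]
  exact PowerSeries.subst_C c

lemma iota_X : iota r PowerSeries.X = X 0 := by
  rw [iota]
  exact PowerSeries.substAlgHom_X _

lemma ker_le (hp : ∀ j, 0 < p j) (z : GG p) {K : Type*} [CommRing K] (κ : defRing' r p →+* K)
    (s : K) (hs : s ^ Finset.univ.lcm p = κ (Ideal.Quotient.mk _ (X 0)))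
    (hy : ∀ j : Fin r, κ (Ideal.Quotient.mk _ (X j.succ)) =
      κ (Ideal.Quotient.mk _ (C (((z j : rootsOfUnity (p j) ℂ) : ℂˣ) : ℂ))) *
        s ^ (Finset.univ.lcm p / p j)) :
    RingHom.ker (phi p hp z) ≤ RingHom.ker κ := by
  intro x hx
  obtain ⟨b, rfl⟩ := piHom_surj p x
  rw [RingHom.mem_ker] at hx ⊢
  rw [phi_piHom] at hx
  have hdv := dvd_of_eval_zero _ _ _ hx
  have hfac : κ (piHom p b) =
      (MvPolynomial.eval₂Hom (Polynomial.C : PowerSeries ℂ →+* Polynomial (PowerSeries ℂ))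
        (fun j => Polynomial.C (PowerSeries.C (((z j : rootsOfUnity (p j) ℂ) : ℂˣ) : ℂ)) *
          Polynomial.X ^ (Finset.univ.lcm p / p j)) b).eval₂
        (κ.comp ((Ideal.Quotient.mk _).comp (iota r).toRingHom)) s := by
    rw [← Polynomial.coe_eval₂RingHom, ← RingHom.comp_apply, ← RingHom.comp_apply]
    congr 1
    apply MvPolynomial.ringHom_ext
    · intro f
      simp [piHom]
    · intro j
      simp [piHom, hy, iota_C]
  rw [hfac]
  obtain ⟨q, hq⟩ := hdv
  rw [hq, Polynomial.eval₂_mul]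
  simp [hs, iota_X]

lemma exists_root {K : Type*} [Field K] (c : ℂ →+* K) (n : ℕ) (hn : 0 < n) (y t : K)
    (h : y ^ n = t ^ n) : ∃ z : rootsOfUnity n ℂ, y = c ((z : ℂˣ) : ℂ) * t := by
  have : NeZero n := ⟨hn.ne'⟩
  by_cases ht : t = 0
  · refine ⟨1, ?_⟩
    rw [ht, zero_pow hn.ne'] at h
    rw [ht, mul_zero]
    exact pow_eq_zero_iff hn.ne' |>.1 h
  · obtain ⟨ζ, hζ⟩ := HasEnoughRootsOfUnity.exists_primitiveRoot ℂ n
    have hζK := hζ.map_of_injective c.injective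
    obtain ⟨i, -, hi⟩ := hζK.eq_pow_of_pow_eq_one (ξ := y / t) (by
      rw [div_pow, h, div_self (pow_ne_zero _ ht)])
    refine ⟨hζ.toRootsOfUnity ^ i, ?_⟩
    have : (((hζ.toRootsOfUnity ^ i : rootsOfUnity n ℂ) : ℂˣ) : ℂ) = ζ ^ i := by simp
    rw [this, map_pow, hi, div_mul_cancel₀ _ ht]

lemma exists_geom_point {R : Type} [CommRing R] (P : Ideal R) [P.IsPrime] :
    ∃ (K : Type) (_ : Field K) (_ : IsAlgClosed K) (κ : R →+* K), RingHom.ker κ ≤ P := by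
  let K := AlgebraicClosure (FractionRing (R ⧸ P))
  let κ : R →+* K := ((algebraMap (FractionRing (R ⧸ P)) K).comp
    (algebraMap (R ⧸ P) (FractionRing (R ⧸ P)))).comp (Ideal.Quotient.mk P)
  refine ⟨K, inferInstance, inferInstance, κ, ?_⟩
  intro x hx
  rw [RingHom.mem_ker] at hx
  have h1 := (map_eq_zero_iff _ (FaithfulSMul.algebraMap_injective
    (FractionRing (R ⧸ P)) K)).1 hx
  have h2 := (map_eq_zero_iff _ (IsFractionRing.injective
    (R ⧸ P) (FractionRing (R ⧸ P)))).1 h1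
  exact Ideal.Quotient.eq_zero_iff_mem.1 h2

lemma exists_ker_le (hp : ∀ j, 0 < p j) (P : Ideal (defRing' r p)) [P.IsPrime] :
    ∃ z, RingHom.ker (phi p hp z) ≤ P := by
  obtain ⟨K, _, _, κ, hκ⟩ := exists_geom_point P
  obtain ⟨s, hs⟩ := IsAlgClosed.exists_pow_nat_eq (κ (Ideal.Quotient.mk _ (X 0)))
    (Nat.pos_of_ne_zero (lcm_ne p hp))
  have hz : ∀ j : Fin r, ∃ z : rootsOfUnity (p j) ℂ, κ (Ideal.Quotient.mk _ (X j.succ)) =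
      (κ.comp ((Ideal.Quotient.mk _).comp C)) ((z : ℂˣ) : ℂ) *
        s ^ (Finset.univ.lcm p / p j) := by
    intro j
    apply exists_root _ _ (hp j)
    rw [← pow_mul, Nat.div_mul_cancel (Finset.dvd_lcm (Finset.mem_univ j)), hs, ← map_pow,
      ← map_pow]
    congr 1
    symm
    rw [Ideal.Quotient.eq]
    exact Ideal.subset_span ⟨j, rfl⟩
  choose z hz using hz
  exact ⟨z, (ker_le p hp z κ s hs hz).trans hκ⟩

lemma phi_C (hp : ∀ j, 0 < p j) (z : GG p) (c : ℂ) :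
    phi p hp z (Ideal.Quotient.mk _ (C c)) = PowerSeries.C c := by
  rw [phi_mk, phi0]
  exact (MvPowerSeries.substAlgHom (subVal_hasSubst p hp z)).commutes c

lemma ker_le_of_coset (hp : ∀ j, 0 < p j) (hd : ∀ j, p j ∣ Finset.univ.lcm p) (z z' : GG p)
    (h : z⁻¹ * z' ∈ (actHom p hd).range) :
    RingHom.ker (phi p hp z) ≤ RingHom.ker (phi p hp z') := by
  obtain ⟨w, hw⟩ := h
  have hz : z' = z * actHom p hd w := by rw [hw]; simp
  refine ker_le p hp z (phi p hp z') (PowerSeries.C (((w : ℂˣ)) : ℂ) * PowerSeries.X) ?_ ?_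
  · have : (((w : ℂˣ)) : ℂ) ^ Finset.univ.lcm p = 1 := by
      have : (w : ℂˣ) ^ Finset.univ.lcm p = 1 := w.2
      simpa only [Units.val_pow_eq_pow_val, Units.val_one] using congrArg Units.val this
    rw [phi_mk, phi0_zero, mul_pow, ← map_pow, this, map_one, one_mul]
  · intro j
    rw [phi_mk, phi0_succ, phi_C, mul_pow, ← mul_assoc, ← map_pow, ← map_mul, hz]
    congr 2

lemma coset_of_ker_le (hp : ∀ j, 0 < p j) (hd : ∀ j, p j ∣ Finset.univ.lcm p) (z z' : GG p)
    (h : RingHom.ker (phi p hp z) ≤ RingHom.ker (phi p hp z')) :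
    z⁻¹ * z' ∈ (actHom p hd).range := by
  apply same_coset p hp hd
  rintro a ⟨k, hk⟩
  have hmon : ∀ v : GG p, phi0 p hp v (∏ j : Fin r, X j.succ ^ a j) =
      PowerSeries.C ((∏ j, (v j : ℂˣ) ^ a j : ℂˣ) : ℂ) *
        PowerSeries.X ^ (Finset.univ.lcm p * k) := by
    intro v
    rw [← hk, map_prod, ← Finset.prod_pow_eq_pow_sum]
    push_cast
    rw [map_prod, ← Finset.prod_mul_distrib]
    refine Finset.prod_congr rfl fun j _ => ?_
    rw [map_pow, phi0_succ, mul_pow, map_pow, ← pow_mul, mul_comm (a j)]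
  set c : ℂ := ((∏ j, (z j : ℂˣ) ^ a j : ℂˣ) : ℂ) with hc
  let e : defRing' r p := Ideal.Quotient.mk _ (∏ j : Fin r, X j.succ ^ a j) -
    Ideal.Quotient.mk _ (C c) * Ideal.Quotient.mk _ (X 0 ^ k)
  have he : ∀ v : GG p, phi p hp v e =
      PowerSeries.C (((∏ j, (v j : ℂˣ) ^ a j : ℂˣ) : ℂ) - c) *
        PowerSeries.X ^ (Finset.univ.lcm p * k) := by
    intro v
    simp only [e]
    rw [map_sub, map_mul, phi_C, phi_mk, phi_mk, hmon, map_pow, phi0_zero, ← pow_mul, map_sub,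
      sub_mul]
  have h1 : e ∈ RingHom.ker (phi p hp z) := by
    rw [RingHom.mem_ker, he, hc, sub_self, map_zero, zero_mul]
  have h2 := h h1
  rw [RingHom.mem_ker, he] at h2
  have h3 := (mul_eq_zero.1 h2).resolve_right (pow_ne_zero _ PowerSeries.X_ne_zero)
  have h4 := congrArg PowerSeries.constantCoeff h3
  rw [PowerSeries.constantCoeff_C, map_zero, sub_eq_zero] at h4
  exact (Units.ext h4).symm

lemma card_minPrimes (hp : ∀ j, 0 < p j) :
    Nat.card (minimalPrimes (defRing' r p)) = (∏ j, p j) / Finset.univ.lcm p := by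
  have hd : ∀ j, p j ∣ Finset.univ.lcm p := fun j => Finset.dvd_lcm (Finset.mem_univ j)
  rw [← card_quot p hp hd]
  let F : GG p ⧸ (actHom p hd).range → Ideal (defRing' r p) := fun q =>
    RingHom.ker (phi p hp q.out)
  have hF : Function.Injective F := by
    intro a b hab
    have := coset_of_ker_le p hp hd a.out b.out (le_of_eq hab)
    have h2 := QuotientGroup.eq.2 this
    rwa [QuotientGroup.out_eq', QuotientGroup.out_eq'] at h2
  have hsymm : ∀ z z', RingHom.ker (phi p hp z) ≤ RingHom.ker (phi p hp z') →
      RingHom.ker (phi p hp z') ≤ RingHom.ker (phi p hp z) := by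
    intro z z' h
    have := coset_of_ker_le p hp hd z z' h
    refine ker_le_of_coset p hp hd z' z ?_
    have h2 := inv_mem this
    simpa using h2
  have hr : minimalPrimes (defRing' r p) = Set.range F := by
    ext P
    constructor
    · intro hP
      have : P.IsPrime := hP.1.1
      obtain ⟨z, hz⟩ := exists_ker_le p hp P
      refine ⟨QuotientGroup.mk z, ?_⟩
      have hc : z⁻¹ * (QuotientGroup.mk z : GG p ⧸ (actHom p hd).range).out ∈
          (actHom p hd).range := by
        rw [← QuotientGroup.eq, QuotientGroup.out_eq']
      have h1 := ker_le_of_coset p hp hd _ _ hc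
      have h2 := hsymm _ _ h1
      exact le_antisymm (h2.trans hz) (hP.2 ⟨RingHom.ker_isPrime _, bot_le⟩ (h2.trans hz))
    · rintro ⟨q, rfl⟩
      refine ⟨⟨RingHom.ker_isPrime _, bot_le⟩, ?_⟩
      rintro Q ⟨hQ, -⟩ hle
      obtain ⟨z, hz⟩ := exists_ker_le p hp Q
      exact (hsymm _ _ (hz.trans hle)).trans hz
  rw [hr]
  exact Nat.card_range_of_injective hF

end

set_option synthInstance.maxHeartbeats 1000000 in
/-- The number of irreducible components of the normalization (the
spectrum of the integral closure of R in its total ring of fractions) of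
Spec ℂ[[ξ, ξ̃₁, …, ξ̃_r]]/(ξ = ξ̃₁^{p 1} = ⋯ = ξ̃_r^{p r}) equals
(∏ p j)/lcm(p 1, …, p r). -/
theorem stmt_5 (r : ℕ) (p : Fin r → ℕ) (hp : ∀ j, 0 < p j) :
    Nat.card (irreducibleComponents (PrimeSpectrum
        (integralClosure (defRing' r p)
          (Localization (nonZeroDivisors (defRing' r p))))))
    = (∏ j, p j) / Finset.univ.lcm p := by
  rw [card_irred_normalization, card_minPrimes p hp]
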